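/- The node formulae of Core XPath (Core_XPath) have precisely the expressive power of unary FO² queries (first-order logic with two variables) over ordered unranked Σ-trees in the vocabulary ≺_ch, ≺*_ch, ≺_ns, ≺*_ns. -/

import Mathlib

/-! Both translations work with definable unary predicates rather than with formulas.

From Core XPath to FO²: by induction on a path formula `β`, the set of nodes from which some
node of a definable set `P` can be reached along `β` is definable in two variables
(`CorePath.foDef`). Keeping `P` as a parameter makes composition cost no extra variable, and
`step⁺` is the corresponding starred relation minus the diagonal.

From FO² to Core XPath: two nodes stand in one of finitely many positions (`OT`), read off from
what remains of them after their longest common prefix. The position decides every atom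
(`OT.eq_iff`, `OT.rel_iff`), and for every position `τ` and every Core XPath predicate `P` the
predicate "some node in position `τ` satisfies `P`" is in Core XPath (`CoreDef.ot`). Induction on
formulas then shows that every two-variable formula `φ` is `Separated`: given one of finitely many
Core XPath colours of `x` and the position of `(x, y)`, it is a Core XPath property of `y` alone.
This form is clearly closed under Boolean operations, and a quantifier over `y` becomes a finite
disjunction over colours and positions (`Separated.exists_coreDef`). -/

namespace UnrankedTrees

/-! ### Unranked trees: tree domains and ordered unranked Σ-trees.
Nodes are finite strings over ℕ; a tree domain is a finite prefix-closed set
of nodes such that `s ++ [i] ∈ D` implies `s ++ [j] ∈ D` for all `j < i`. -/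

abbrev Node : Type := List ℕ

/-- An ordered unranked tree over alphabet `A`: a tree domain with a labeling. -/
structure UTree (A : Type) where
  dom : Finset Node
  nil_mem : ([] : Node) ∈ dom
  prefix_closed : ∀ ⦃s t : Node⦄, s ∈ dom → t <+: s → t ∈ dom
  sib_closed : ∀ ⦃s : Node⦄ ⦃i j : ℕ⦄, s ++ [i] ∈ dom → j < i → s ++ [j] ∈ dom
  label : Node → A

namespace UTree

variable {A : Type}

/-- The child relation `≺_ch`. -/
def childR (T : UTree A) (s t : Node) : Prop :=
  s ∈ T.dom ∧ t ∈ T.dom ∧ ∃ i : ℕ, t = s ++ [i]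

/-- The descendant-or-self relation `≺*_ch` (the prefix relation). -/
def descR (T : UTree A) (s t : Node) : Prop :=
  s ∈ T.dom ∧ t ∈ T.dom ∧ s <+: t

/-- The next-sibling relation `≺_ns`. -/
def nsR (T : UTree A) (s t : Node) : Prop :=
  s ∈ T.dom ∧ t ∈ T.dom ∧ ∃ (u : Node) (i : ℕ), s = u ++ [i] ∧ t = u ++ [i + 1]

/-- The sibling ordering `≺*_ns` (reflexive-transitive closure of next-sibling). -/
def sibR (T : UTree A) (s t : Node) : Prop :=
  s ∈ T.dom ∧ t ∈ T.dom ∧ ∃ (u : Node) (i j : ℕ), s = u ++ [i] ∧ t = u ++ [j] ∧ i ≤ j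

/-- The first-child relation `≺_fc`. -/
def firstChildR (T : UTree A) (s t : Node) : Prop :=
  s ∈ T.dom ∧ t ∈ T.dom ∧ t = s ++ [0]

/-- The number of children of a node. -/
noncomputable def childCount (T : UTree A) (s : Node) : ℕ :=
  Set.ncard {i : ℕ | s ++ [i] ∈ T.dom}

/-- The list of children of a node `s`, in sibling order: `s·0, …, s·(n-1)`. -/
noncomputable def childrenList (T : UTree A) (s : Node) : List Node :=
  (List.range (T.childCount s)).map fun i => s ++ [i]

/-- `s` is a leaf of `T`. -/
def isLeaf (T : UTree A) (s : Node) : Prop :=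
  s ∈ T.dom ∧ ∀ i : ℕ, s ++ [i] ∉ T.dom

/-- `s` has no next sibling in `T` (the root also counts as "last"). -/
def isLast (T : UTree A) (s : Node) : Prop :=
  s = [] ∨ ∃ (u : Node) (i : ℕ), s = u ++ [i] ∧ u ++ [i + 1] ∉ T.dom

end UTree

/-! ### XPath steps. -/

inductive XStep : Type where
  | ch : XStep        -- ≺_ch
  | chI : XStep       -- ≺_ch⁻
  | ns : XStep        -- ≺_ns
  | nsI : XStep       -- ≺_ns⁻

def XStep.rel {A : Type} (T : UTree A) : XStep → Node → Node → Prop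
  | .ch => T.childR
  | .chI => fun s t => T.childR t s
  | .ns => T.nsR
  | .nsI => fun s t => T.nsR t s

/-! ### Core XPath. -/

mutual
  inductive CoreNode (A : Type) : Type where
    | lab : A → CoreNode A
    | not : CoreNode A → CoreNode A
    | or : CoreNode A → CoreNode A → CoreNode A
    | E : CorePath A → CoreNode A
  inductive CorePath (A : Type) : Type where
    | test : CoreNode A → CorePath A
    | step : XStep → CorePath A
    | stepPlus : XStep → CorePath A              -- step⁺ (transitive closure)
    | comp : CorePath A → CorePath A → CorePath A
    | or : CorePath A → CorePath A → CorePath A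
end

mutual
  def CoreNode.Sat {A : Type} (T : UTree A) : Node → CoreNode A → Prop
    | s, .lab a => s ∈ T.dom ∧ T.label s = a
    | s, .not α => ¬ CoreNode.Sat T s α
    | s, .or α β => CoreNode.Sat T s α ∨ CoreNode.Sat T s β
    | s, .E β => ∃ t : Node, CorePath.Sat T s t β
  def CorePath.Sat {A : Type} (T : UTree A) : Node → Node → CorePath A → Prop
    | s, t, .test α => s = t ∧ CoreNode.Sat T s α
    | s, t, .step st => st.rel T s t
    | s, t, .stepPlus st => Relation.TransGen (st.rel T) s t
    | s, t, .comp β γ => ∃ u : Node, CorePath.Sat T s u β ∧ CorePath.Sat T u t γ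
    | s, t, .or β γ => CorePath.Sat T s t β ∨ CorePath.Sat T s t γ
end

/-! ### FO² over the vocabulary ≺_ch, ≺*_ch, ≺_ns, ≺*_ns. -/

inductive Vocab4 : Type where
  | ch : Vocab4
  | desc : Vocab4
  | ns : Vocab4
  | sib : Vocab4

def Vocab4.rel {A : Type} (T : UTree A) : Vocab4 → Node → Node → Prop
  | .ch => T.childR
  | .desc => T.descR
  | .ns => T.nsR
  | .sib => T.sibR

inductive FOV (A : Type) : Type where
  | eq : ℕ → ℕ → FOV A
  | lab : A → ℕ → FOV A
  | rel : Vocab4 → ℕ → ℕ → FOV A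
  | not : FOV A → FOV A
  | and : FOV A → FOV A → FOV A
  | ex : ℕ → FOV A → FOV A

namespace FOV

variable {A : Type}

def Sat (T : UTree A) (v : ℕ → Node) : FOV A → Prop
  | .eq x y => v x = v y
  | .lab a x => v x ∈ T.dom ∧ T.label (v x) = a
  | .rel r x y => r.rel T (v x) (v y)
  | .not φ => ¬ Sat T v φ
  | .and φ ψ => Sat T v φ ∧ Sat T v ψ
  | .ex n φ => ∃ s ∈ T.dom, Sat T (Function.update v n s) φ

/-- The list of variable indices occurring in a formula. -/
def vars : FOV A → List ℕ
  | .eq x y => [x, y]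
  | .lab _ x => [x]
  | .rel _ x y => [x, y]
  | .not φ => vars φ
  | .and φ ψ => vars φ ++ vars ψ
  | .ex n φ => n :: vars φ

/-- A two-variable formula: only the variables `0` and `1` are used. -/
def TwoVar (φ : FOV A) : Prop := ∀ n ∈ φ.vars, n < 2

end FOV

/-! ### Lists and the atomic relations -/

section Trees

variable {A : Type}

theorem transGen_childR (T : UTree A) (s t : Node) :
    Relation.TransGen T.childR s t ↔
      s ∈ T.dom ∧ t ∈ T.dom ∧ ∃ (i : ℕ) (w : Node), t = s ++ i :: w := by
  constructor
  · intro h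
    induction h with
    | single h =>
      obtain ⟨hs, ht, i, rfl⟩ := h
      exact ⟨hs, ht, i, [], rfl⟩
    | tail _ h ih =>
      obtain ⟨hs, _, i, w, rfl⟩ := ih
      obtain ⟨_, ht, j, rfl⟩ := h
      exact ⟨hs, ht, i, w ++ [j], by simp⟩
  · rintro ⟨hs, ht, i, w, rfl⟩
    induction w using List.reverseRecOn with
    | nil => exact .single ⟨hs, ht, i, rfl⟩
    | append_singleton w j ih =>
      have hw : s ++ i :: w ∈ T.dom :=
        T.prefix_closed ht ⟨[j], by simp⟩
      exact (ih hw).tail ⟨hw, ht, j, by simp⟩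

theorem transGen_nsR (T : UTree A) (s t : Node) :
    Relation.TransGen T.nsR s t ↔
      s ∈ T.dom ∧ t ∈ T.dom ∧
        ∃ (u : Node) (i j : ℕ), i < j ∧ s = u ++ [i] ∧ t = u ++ [j] := by
  constructor
  · intro h
    induction h with
    | single h =>
      obtain ⟨hs, ht, u, i, rfl, rfl⟩ := h
      exact ⟨hs, ht, u, i, i + 1, by omega, rfl, rfl⟩
    | tail _ h ih =>
      obtain ⟨hs, _, u, i, j, hij, rfl, rfl⟩ := ih
      obtain ⟨_, ht, u', k, h1, rfl⟩ := h
      obtain ⟨rfl, h2⟩ := List.append_inj' h1 rfl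
      simp only [List.cons.injEq, and_true] at h2
      exact ⟨hs, ht, u, i, k + 1, by omega, rfl, rfl⟩
  · rintro ⟨hs, ht, u, i, j, hij, rfl, rfl⟩
    induction j, hij using Nat.le_induction with
    | base => exact .single ⟨hs, ht, u, i, rfl, rfl⟩
    | succ j hij ih =>
      have hj : u ++ [j] ∈ T.dom := T.sib_closed ht (Nat.lt_succ_self j)
      exact (ih hj).tail ⟨hj, ht, u, j, rfl, rfl⟩

/-- Two strings share no nonempty prefix. -/
def Diverge (w w' : Node) : Prop :=
  ∀ (a : ℕ) (l l' : Node), w = a :: l → w' ≠ a :: l'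

theorem exists_diverge (s t : Node) :
    ∃ u w w' : Node, s = u ++ w ∧ t = u ++ w' ∧ Diverge w w' := by
  induction s generalizing t with
  | nil => exact ⟨[], [], t, rfl, rfl, by simp [Diverge]⟩
  | cons a s ih =>
    cases t with
    | nil => exact ⟨[], a :: s, [], rfl, rfl, by simp [Diverge]⟩
    | cons b t =>
      by_cases hab : a = b
      · subst hab
        obtain ⟨u, w, w', rfl, rfl, h⟩ := ih t
        exact ⟨a :: u, w, w', rfl, rfl, h⟩
      · refine ⟨[], a :: s, b :: t, rfl, rfl, ?_⟩
        rintro c l l' h1 h2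
        simp only [List.cons.injEq] at h1 h2
        exact hab (h1.1.trans h2.1.symm)

/-- Siblings diverge exactly at their last letter, unless they coincide. -/
theorem sibling_diverge {u w w' p : Node} {i j : ℕ} (hd : Diverge w w')
    (h1 : u ++ w = p ++ [i]) (h2 : u ++ w' = p ++ [j]) :
    (w = [] ∧ w' = [] ∧ u ≠ [] ∧ i = j) ∨ (w = [i] ∧ w' = [j]) := by
  have hl : w.length = w'.length := by
    have e1 := congrArg List.length h1
    have e2 := congrArg List.length h2
    simp at e1 e2
    omega
  rcases List.eq_nil_or_concat w with rfl | ⟨l, a, rfl⟩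
  · have hw : w' = [] := List.eq_nil_of_length_eq_zero (by simpa using hl.symm)
    subst hw
    simp only [List.append_nil] at h1 h2
    left
    rw [h1] at h2
    refine ⟨rfl, rfl, by simp [h1], by simpa using h2⟩
  · rcases List.eq_nil_or_concat w' with rfl | ⟨l', b, rfl⟩
    · simp at hl
    · rw [List.concat_eq_append] at h1 h2 hd ⊢
      rw [List.concat_eq_append] at hd ⊢
      rw [← List.append_assoc] at h1 h2
      obtain ⟨e1, e2⟩ := List.append_inj' h1 rfl
      obtain ⟨e3, e4⟩ := List.append_inj' h2 rfl
      have hll : l = l' := List.append_cancel_left (e1.trans e3.symm)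
      subst hll
      cases l with
      | nil => right; exact ⟨by simpa using e2, by simpa using e4⟩
      | cons c l => exact absurd rfl (hd c (l ++ [a]) (l ++ [b]) rfl)

/-! ### Order types of pairs of nodes -/

/-- The possible relative positions of two nodes `s`, `t`. Primed constructors are the
converses of the unprimed ones. Equality is split according to whether the node is the root,
because `≺*_ns` is not reflexive there. -/
inductive OT : Type where
  | root | self | child | desc | child' | desc' | next | later | next' | later' | other

/-- The position `τ` expressed through `s = u ++ w`, `t = u ++ w'`, where `u` is the longest
common prefix of `s` and `t`. -/
def OT.cond : OT → Node → Node → Node → Prop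
  | .root, u, w, w' => u = [] ∧ w = [] ∧ w' = []
  | .self, u, w, w' => u ≠ [] ∧ w = [] ∧ w' = []
  | .child, _, w, w' => w = [] ∧ ∃ i, w' = [i]
  | .desc, _, w, w' => w = [] ∧ ∃ i j l, w' = i :: j :: l
  | .child', _, w, w' => w' = [] ∧ ∃ i, w = [i]
  | .desc', _, w, w' => w' = [] ∧ ∃ i j l, w = i :: j :: l
  | .next, _, w, w' => ∃ i, w = [i] ∧ w' = [i + 1]
  | .later, _, w, w' => ∃ i j, i + 1 < j ∧ w = [i] ∧ w' = [j]
  | .next', _, w, w' => ∃ i, w' = [i] ∧ w = [i + 1]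
  | .later', _, w, w' => ∃ i j, i + 1 < j ∧ w' = [i] ∧ w = [j]
  | .other, _, w, z => ∃ i j l m, i ≠ j ∧ (l ≠ [] ∨ m ≠ []) ∧ w = i :: l ∧ z = j :: m

/-- `τ.rel s t` says that the pair `(s, t)` is in position `τ`. -/
def OT.rel (τ : OT) (s t : Node) : Prop :=
  ∃ u w w' : Node, s = u ++ w ∧ t = u ++ w' ∧ τ.cond u w w'

theorem OT.diverge {τ : OT} {u w w' : Node} (h : τ.cond u w w') : Diverge w w' := by
  intro a l l' h1 h2
  subst h1 h2
  cases τ <;> simp [OT.cond] at h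

theorem OT.exists_rel (s t : Node) : ∃ τ : OT, τ.rel s t := by
  obtain ⟨u, w, w', rfl, rfl, hd⟩ := exists_diverge s t
  suffices h : ∃ τ : OT, τ.cond u w w' by
    obtain ⟨τ, h⟩ := h
    exact ⟨τ, u, w, w', rfl, rfl, h⟩
  match w, w', hd with
  | [], [], _ =>
    by_cases hu : u = []
    · exact ⟨.root, hu, rfl, rfl⟩
    · exact ⟨.self, hu, rfl, rfl⟩
  | [], [i], _ => exact ⟨.child, rfl, i, rfl⟩
  | [], i :: j :: l, _ => exact ⟨.desc, rfl, i, j, l, rfl⟩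
  | [i], [], _ => exact ⟨.child', rfl, i, rfl⟩
  | i :: j :: l, [], _ => exact ⟨.desc', rfl, i, j, l, rfl⟩
  | i :: l, j :: l', hd =>
    have hij : i ≠ j := fun e => hd i l l' rfl (by rw [e])
    by_cases hl : l ≠ [] ∨ l' ≠ []
    · exact ⟨.other, i, j, l, l', hij, hl, rfl, rfl⟩
    · push Not at hl
      obtain ⟨rfl, rfl⟩ := hl
      rcases lt_trichotomy (i + 1) j with h | h | h
      · exact ⟨.later, i, j, h, rfl, rfl⟩
      · exact ⟨.next, i, rfl, by rw [h]⟩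
      · rcases lt_trichotomy (j + 1) i with h' | h' | h'
        · exact ⟨.later', j, i, h', rfl, rfl⟩
        · exact ⟨.next', j, rfl, by rw [h']⟩
        · omega

/-- The converse position. -/
def OT.swap : OT → OT
  | .root => .root
  | .self => .self
  | .child => .child'
  | .desc => .desc'
  | .child' => .child
  | .desc' => .desc
  | .next => .next'
  | .later => .later'
  | .next' => .next
  | .later' => .later
  | .other => .other

theorem OT.rel_swap {τ : OT} {s t : Node} (h : τ.rel s t) : τ.swap.rel t s := by
  obtain ⟨u, w, w', rfl, rfl, h⟩ := h
  refine ⟨u, w', w, rfl, rfl, ?_⟩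
  cases τ <;> simp only [OT.cond, OT.swap] at h ⊢ <;> try tauto
  obtain ⟨i, j, l, l', h1, h2, h3, h4⟩ := h
  exact ⟨j, i, l', l, h1.symm, h2.symm, h4, h3⟩

/-- The positions in which an atomic relation holds. -/
def OT.holds : Vocab4 → OT → Prop
  | .ch, τ => τ = .child
  | .desc, τ => τ = .root ∨ τ = .self ∨ τ = .child ∨ τ = .desc
  | .ns, τ => τ = .next
  | .sib, τ => τ = .self ∨ τ = .next ∨ τ = .later

theorem OT.eq_iff {τ : OT} {s t : Node} (h : τ.rel s t) :
    s = t ↔ (τ = .root ∨ τ = .self) := by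
  obtain ⟨u, w, w', rfl, rfl, h⟩ := h
  rw [List.append_cancel_left_eq]
  cases τ <;> simp [OT.cond] at h ⊢ <;> grind

theorem OT.rel_iff (T : UTree A) {s t : Node} (hs : s ∈ T.dom) (ht : t ∈ T.dom)
    {τ : OT} (h : τ.rel s t) (r : Vocab4) : r.rel T s t ↔ OT.holds r τ := by
  obtain ⟨u, w, w', rfl, rfl, h⟩ := h
  have hd := OT.diverge h
  cases r with
  | ch =>
    simp only [Vocab4.rel, UTree.childR, hs, ht, true_and, List.append_assoc,
      List.append_cancel_left_eq, OT.holds]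
    cases τ <;> simp [OT.cond] at h ⊢ <;> grind
  | desc =>
    simp only [Vocab4.rel, UTree.descR, hs, ht, true_and, List.prefix_append_right_inj, OT.holds]
    cases τ <;> simp [OT.cond] at h ⊢ <;> grind
  | ns =>
    have key : Vocab4.ns.rel T (u ++ w) (u ++ w') ↔ ∃ i, w = [i] ∧ w' = [i + 1] := by
      constructor
      · rintro ⟨_, _, p, i, h1, h2⟩
        rcases sibling_diverge hd h1 h2 with h | h
        · omega
        · exact ⟨i, h⟩
      · rintro ⟨i, rfl, rfl⟩
        exact ⟨hs, ht, u, i, rfl, rfl⟩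
    rw [key]
    cases τ <;> simp [OT.cond, OT.holds] at h ⊢ <;> grind
  | sib =>
    have key : Vocab4.sib.rel T (u ++ w) (u ++ w') ↔
        (w = [] ∧ w' = [] ∧ u ≠ []) ∨ ∃ i j, i ≤ j ∧ w = [i] ∧ w' = [j] := by
      constructor
      · rintro ⟨_, _, p, i, j, h1, h2, hij⟩
        rcases sibling_diverge hd h1 h2 with h | h
        · exact .inl ⟨h.1, h.2.1, h.2.2.1⟩
        · exact .inr ⟨i, j, hij, h⟩
      · rintro (⟨rfl, rfl, hu⟩ | ⟨i, j, hij, rfl, rfl⟩)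
        · obtain ⟨p, i, hp⟩ := (List.eq_nil_or_concat u).resolve_left hu
          exact ⟨hs, ht, p, i, i, by simpa using hp, by simpa using hp, le_rfl⟩
        · exact ⟨hs, ht, u, i, j, rfl, rfl, hij⟩
    rw [key]
    cases τ with
    | next =>
      obtain ⟨i, rfl, rfl⟩ := h
      simp [OT.holds]
    | later =>
      obtain ⟨i, j, hij, rfl, rfl⟩ := h
      simp only [OT.holds]
      exact iff_of_true (.inr ⟨i, j, by omega, rfl, rfl⟩) (by simp)
    | _ =>
      simp [OT.cond, OT.holds] at h ⊢
      grind

/-! ### Predicates definable in Core XPath -/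

/-- A family of unary predicates defined by a node formula of Core XPath. -/
def CoreDef (P : UTree A → Node → Prop) : Prop :=
  ∃ α : CoreNode A, ∀ (T : UTree A) (s : Node), s ∈ T.dom → (CoreNode.Sat T s α ↔ P T s)

namespace CoreDef

variable {P Q : UTree A → Node → Prop}

theorem congr (hP : CoreDef P) (h : ∀ T s, s ∈ T.dom → (P T s ↔ Q T s)) : CoreDef Q := by
  obtain ⟨α, hα⟩ := hP
  exact ⟨α, fun T s hs => (hα T s hs).trans (h T s hs)⟩

theorem not (hP : CoreDef P) : CoreDef fun T s => ¬ P T s := by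
  obtain ⟨α, hα⟩ := hP
  exact ⟨.not α, fun T s hs => by rw [CoreNode.Sat, hα T s hs]⟩

theorem or (hP : CoreDef P) (hQ : CoreDef Q) : CoreDef fun T s => P T s ∨ Q T s := by
  obtain ⟨α, hα⟩ := hP
  obtain ⟨β, hβ⟩ := hQ
  exact ⟨.or α β, fun T s hs => by rw [CoreNode.Sat, hα T s hs, hβ T s hs]⟩

theorem and (hP : CoreDef P) (hQ : CoreDef Q) : CoreDef fun T s => P T s ∧ Q T s :=
  (hP.not.or hQ.not).not.congr fun T s _ => by tauto

theorem const (p : Prop) : CoreDef fun (_ : UTree A) _ => p := by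
  -- An arbitrary formula, used to write a tautology even over an empty alphabet.
  have h0 : CoreDef fun (T : UTree A) s => CoreNode.Sat T s (.E (.step .ch)) :=
    ⟨_, fun _ _ _ => Iff.rfl⟩
  by_cases hp : p
  · exact (h0.or h0.not).congr fun T s _ => by tauto
  · exact (h0.and h0.not).congr fun T s _ => by tauto

theorem lab (a : A) : CoreDef fun T s => s ∈ T.dom ∧ T.label s = a :=
  ⟨.lab a, fun T s _ => by rw [CoreNode.Sat]⟩

theorem exists_finite {K : Type} [Finite K] {P : K → UTree A → Node → Prop}
    (hP : ∀ k, CoreDef (P k)) : CoreDef fun T s => ∃ k, P k T s := by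
  classical
  have := Fintype.ofFinite K
  have key : ∀ S : Finset K, CoreDef fun T s => ∃ k ∈ S, P k T s := by
    intro S
    induction S using Finset.induction_on with
    | empty => exact (const False).congr fun T s _ => by simp
    | insert k S _ ih => exact ((hP k).or ih).congr fun T s _ => by simp
  exact (key Finset.univ).congr fun T s _ => by simp

theorem rel_mem (T : UTree A) (st : XStep) {s t : Node} (h : st.rel T s t) : t ∈ T.dom := by
  cases st
  · exact h.2.1
  · exact h.1
  · exact h.2.1
  · exact h.1

theorem transGen_mem (T : UTree A) (st : XStep) {s t : Node}
    (h : Relation.TransGen (st.rel T) s t) : t ∈ T.dom := by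
  cases h with
  | single h => exact rel_mem T st h
  | tail _ h => exact rel_mem T st h

theorem step (st : XStep) (hP : CoreDef P) :
    CoreDef fun T s => ∃ t, st.rel T s t ∧ P T t := by
  obtain ⟨α, hα⟩ := hP
  refine ⟨.E (.comp (.step st) (.test α)), fun T s hs => ?_⟩
  simp only [CoreNode.Sat, CorePath.Sat]
  constructor
  · rintro ⟨_, t, h, rfl, h'⟩
    exact ⟨t, h, (hα T t (rel_mem T st h)).1 h'⟩
  · rintro ⟨t, h, h'⟩
    exact ⟨t, t, h, rfl, (hα T t (rel_mem T st h)).2 h'⟩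

theorem plus (st : XStep) (hP : CoreDef P) :
    CoreDef fun T s => ∃ t, Relation.TransGen (st.rel T) s t ∧ P T t := by
  obtain ⟨α, hα⟩ := hP
  refine ⟨.E (.comp (.stepPlus st) (.test α)), fun T s hs => ?_⟩
  simp only [CoreNode.Sat, CorePath.Sat]
  constructor
  · rintro ⟨_, t, h, rfl, h'⟩
    exact ⟨t, h, (hα T t (transGen_mem T st h)).1 h'⟩
  · rintro ⟨t, h, h'⟩
    exact ⟨t, t, h, rfl, (hα T t (transGen_mem T st h)).2 h'⟩

theorem child (hP : CoreDef P) :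
    CoreDef fun T s => ∃ i, s ++ [i] ∈ T.dom ∧ P T (s ++ [i]) :=
  (hP.step .ch).congr fun T s hs => by
    constructor
    · rintro ⟨t, ⟨_, ht, i, rfl⟩, h⟩
      exact ⟨i, ht, h⟩
    · rintro ⟨i, ht, h⟩
      exact ⟨_, ⟨hs, ht, i, rfl⟩, h⟩

theorem descend (hP : CoreDef P) :
    CoreDef fun T s => ∃ i w, s ++ i :: w ∈ T.dom ∧ P T (s ++ i :: w) :=
  (hP.plus .ch).congr fun T s hs => by
    simp only [XStep.rel, transGen_childR]
    constructor
    · rintro ⟨t, ⟨_, ht, i, w, rfl⟩, h⟩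
      exact ⟨i, w, ht, h⟩
    · rintro ⟨i, w, ht, h⟩
      exact ⟨_, ⟨hs, ht, i, w, rfl⟩, h⟩

theorem parent (hP : CoreDef P) :
    CoreDef fun T s => ∃ t i, s = t ++ [i] ∧ P T t :=
  (hP.step .chI).congr fun T s hs => by
    constructor
    · rintro ⟨t, ⟨_, ht, i, rfl⟩, h⟩
      exact ⟨t, i, rfl, h⟩
    · rintro ⟨t, i, rfl, h⟩
      exact ⟨t, ⟨T.prefix_closed hs ⟨_, rfl⟩, hs, i, rfl⟩, h⟩

theorem ascend (hP : CoreDef P) :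
    CoreDef fun T s => ∃ t i w, s = t ++ i :: w ∧ P T t :=
  (hP.plus .chI).congr fun T s hs => by
    have hsw : ∀ t, Relation.TransGen (XStep.chI.rel T) s t ↔ Relation.TransGen T.childR t s :=
      fun t => Relation.transGen_swap
    simp only [hsw, transGen_childR]
    constructor
    · rintro ⟨t, ⟨_, ht, i, w, rfl⟩, h⟩
      exact ⟨t, i, w, rfl, h⟩
    · rintro ⟨t, i, w, rfl, h⟩
      exact ⟨t, ⟨T.prefix_closed hs ⟨_, rfl⟩, hs, i, w, rfl⟩, h⟩

theorem next (hP : CoreDef P) :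
    CoreDef fun T s => ∃ u i, s = u ++ [i] ∧ u ++ [i + 1] ∈ T.dom ∧ P T (u ++ [i + 1]) :=
  (hP.step .ns).congr fun T s hs => by
    constructor
    · rintro ⟨t, ⟨_, ht, u, i, rfl, rfl⟩, h⟩
      exact ⟨u, i, rfl, ht, h⟩
    · rintro ⟨u, i, rfl, ht, h⟩
      exact ⟨_, ⟨hs, ht, u, i, rfl, rfl⟩, h⟩

theorem prev (hP : CoreDef P) :
    CoreDef fun T s => ∃ u i, s = u ++ [i + 1] ∧ P T (u ++ [i]) :=
  (hP.step .nsI).congr fun T s hs => by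
    constructor
    · rintro ⟨t, ⟨_, ht, u, i, rfl, rfl⟩, h⟩
      exact ⟨u, i, rfl, h⟩
    · rintro ⟨u, i, rfl, h⟩
      exact ⟨_, ⟨T.sib_closed hs (Nat.lt_succ_self i), hs, u, i, rfl, rfl⟩, h⟩

theorem later (hP : CoreDef P) :
    CoreDef fun T s => ∃ u i j, i < j ∧ s = u ++ [i] ∧ u ++ [j] ∈ T.dom ∧ P T (u ++ [j]) :=
  (hP.plus .ns).congr fun T s hs => by
    simp only [XStep.rel, transGen_nsR]
    constructor
    · rintro ⟨t, ⟨_, ht, u, i, j, hij, rfl, rfl⟩, h⟩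
      exact ⟨u, i, j, hij, rfl, ht, h⟩
    · rintro ⟨u, i, j, hij, rfl, ht, h⟩
      exact ⟨_, ⟨hs, ht, u, i, j, hij, rfl, rfl⟩, h⟩

theorem earlier (hP : CoreDef P) :
    CoreDef fun T s => ∃ u i j, i < j ∧ s = u ++ [j] ∧ P T (u ++ [i]) :=
  (hP.plus .nsI).congr fun T s hs => by
    have hsw : ∀ t, Relation.TransGen (XStep.nsI.rel T) s t ↔ Relation.TransGen T.nsR t s :=
      fun t => Relation.transGen_swap
    simp only [hsw, transGen_nsR]
    constructor
    · rintro ⟨t, ⟨_, ht, u, i, j, hij, rfl, rfl⟩, h⟩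
      exact ⟨u, i, j, hij, rfl, h⟩
    · rintro ⟨u, i, j, hij, rfl, h⟩
      exact ⟨_, ⟨T.sib_closed hs hij, hs, u, i, j, hij, rfl, rfl⟩, h⟩

theorem sibling (hP : CoreDef P) :
    CoreDef fun T s => ∃ u i j, i ≠ j ∧ s = u ++ [i] ∧ u ++ [j] ∈ T.dom ∧ P T (u ++ [j]) :=
  (hP.later.or hP.earlier).congr fun T s hs => by
    constructor
    · rintro (⟨u, i, j, hij, rfl, ht, h⟩ | ⟨u, i, j, hij, rfl, h⟩)
      · exact ⟨u, i, j, hij.ne, rfl, ht, h⟩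
      · exact ⟨u, j, i, hij.ne', rfl, T.sib_closed hs hij, h⟩
    · rintro ⟨u, i, j, hij, rfl, ht, h⟩
      rcases lt_or_gt_of_ne hij with hij | hij
      · exact .inl ⟨u, i, j, hij, rfl, ht, h⟩
      · exact .inr ⟨u, j, i, hij, rfl, h⟩

/-- Each position yields a modality of Core XPath. -/
theorem ot (τ : OT) (hP : CoreDef P) :
    CoreDef fun T s => ∃ t ∈ T.dom, τ.rel s t ∧ P T t := by
  have hpar : CoreDef fun (T : UTree A) s => ∃ t i, s = t ++ [i] ∧ True :=
    (const True).parent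
  have hroot : ∀ s : Node, (∃ t i, s = t ++ [i] ∧ True) ↔ s ≠ [] := by
    intro s
    rcases List.eq_nil_or_concat s with rfl | ⟨l, a, rfl⟩ <;> simp
  cases τ with
  | root =>
    refine (hpar.not.and hP).congr fun T s hs => ?_
    rw [hroot, not_not]
    constructor
    · rintro ⟨rfl, h⟩
      exact ⟨[], hs, ⟨[], [], [], rfl, rfl, rfl, rfl, rfl⟩, h⟩
    · rintro ⟨t, ht, ⟨u, w, w', rfl, rfl, rfl, rfl, rfl⟩, h⟩
      exact ⟨rfl, h⟩
  | self =>
    refine (hpar.and hP).congr fun T s hs => ?_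
    rw [hroot]
    constructor
    · rintro ⟨hne, h⟩
      exact ⟨s, hs, ⟨s, [], [], by simp, by simp, hne, rfl, rfl⟩, h⟩
    · rintro ⟨t, ht, ⟨u, w, w', rfl, rfl, hne, rfl, rfl⟩, h⟩
      exact ⟨by simpa using hne, h⟩
  | child =>
    refine hP.child.congr fun T s hs => ?_
    constructor
    · rintro ⟨i, ht, h⟩
      exact ⟨_, ht, ⟨s, [], [i], by simp, rfl, rfl, i, rfl⟩, h⟩
    · rintro ⟨t, ht, ⟨u, w, w', rfl, rfl, rfl, i, rfl⟩, h⟩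
      exact ⟨i, by simpa using ht, by simpa using h⟩
  | desc =>
    refine hP.descend.child.congr fun T s hs => ?_
    constructor
    · rintro ⟨i, _, j, w, ht, h⟩
      exact ⟨_, ht, ⟨s, [], i :: j :: w, by simp, by simp, rfl, i, j, w, rfl⟩, h⟩
    · rintro ⟨t, ht, ⟨u, w, w', rfl, rfl, rfl, i, j, l, rfl⟩, h⟩
      refine ⟨i, T.prefix_closed ht ⟨j :: l, by simp⟩, j, l, by simpa using ht, by simpa using h⟩
  | child' =>
    refine hP.parent.congr fun T s hs => ?_
    constructor
    · rintro ⟨t, i, rfl, h⟩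
      exact ⟨t, T.prefix_closed hs ⟨_, rfl⟩, ⟨t, [i], [], rfl, by simp, rfl, i, rfl⟩, h⟩
    · rintro ⟨t, ht, ⟨u, w, w', rfl, rfl, rfl, i, rfl⟩, h⟩
      exact ⟨u, i, rfl, by simpa using h⟩
  | desc' =>
    refine hP.parent.ascend.congr fun T s hs => ?_
    constructor
    · rintro ⟨_, j, w, rfl, t, i, rfl, h⟩
      exact ⟨t, T.prefix_closed hs ⟨i :: j :: w, by simp⟩,
        ⟨t, i :: j :: w, [], by simp, by simp, rfl, i, j, w, rfl⟩, h⟩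
    · rintro ⟨t, ht, ⟨u, w, w', rfl, rfl, rfl, i, j, l, rfl⟩, h⟩
      exact ⟨u ++ [i], j, l, by simp, u, i, rfl, by simpa using h⟩
  | next =>
    refine hP.next.congr fun T s hs => ?_
    constructor
    · rintro ⟨u, i, rfl, ht, h⟩
      exact ⟨_, ht, ⟨u, [i], [i + 1], rfl, rfl, i, rfl, rfl⟩, h⟩
    · rintro ⟨t, ht, ⟨u, w, w', rfl, rfl, i, rfl, rfl⟩, h⟩
      exact ⟨u, i, rfl, ht, h⟩
  | later =>
    refine hP.later.next.congr fun T s hs => ?_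
    constructor
    · rintro ⟨u, i, rfl, _, u', i', j, hij, e, ht, h⟩
      obtain ⟨rfl, e1⟩ := List.append_inj' e rfl
      have e2 := List.head_eq_of_cons_eq e1
      exact ⟨_, ht, ⟨u, [i], [j], rfl, rfl, i, j, by omega, rfl, rfl⟩, h⟩
    · rintro ⟨t, ht, ⟨u, w, w', rfl, rfl, i, j, hij, rfl, rfl⟩, h⟩
      exact ⟨u, i, rfl, T.sib_closed ht hij, u, i + 1, j, hij, rfl, ht, h⟩
  | next' =>
    refine hP.prev.congr fun T s hs => ?_
    constructor
    · rintro ⟨u, i, rfl, h⟩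
      exact ⟨_, T.sib_closed hs (Nat.lt_succ_self i), ⟨u, [i + 1], [i], rfl, rfl, i, rfl, rfl⟩, h⟩
    · rintro ⟨t, ht, ⟨u, w, w', rfl, rfl, i, rfl, rfl⟩, h⟩
      exact ⟨u, i, rfl, h⟩
  | later' =>
    refine hP.prev.earlier.congr fun T s hs => ?_
    constructor
    · rintro ⟨u, i, j, hij, rfl, u', i', e, h⟩
      obtain ⟨rfl, e1⟩ := List.append_inj' e rfl
      have e2 := List.head_eq_of_cons_eq e1
      exact ⟨_, T.sib_closed hs (by omega : i' < j),
        ⟨u, [j], [i'], rfl, rfl, i', j, by omega, rfl, rfl⟩, h⟩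
    · rintro ⟨t, ht, ⟨u, w, w', rfl, rfl, i, j, hij, rfl, rfl⟩, h⟩
      exact ⟨u, i + 1, j, hij, rfl, u, i, rfl, h⟩
  | other =>
    -- Climb to the sibling pair below the longest common prefix and descend again; at least
    -- one of the two vertical moves is nontrivial.
    refine (hP.descend.sibling.or (hP.or hP.descend).sibling.ascend).congr fun T s hs => ?_
    constructor
    · rintro (⟨u, i, j, hij, rfl, _, k, l', ht, h⟩ |
        ⟨_, k, l, rfl, u, i, j, hij, rfl, hj, h | ⟨k', l', ht, h⟩⟩)
      · exact ⟨_, ht, ⟨u, [i], j :: k :: l', rfl, by simp, i, j, [], k :: l', hij, by simp,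
          rfl, rfl⟩, h⟩
      · exact ⟨_, hj, ⟨u, i :: k :: l, [j], by simp, rfl, i, j, k :: l, [], hij, by simp,
          rfl, rfl⟩, h⟩
      · exact ⟨_, ht, ⟨u, i :: k :: l, j :: k' :: l', by simp, by simp, i, j, k :: l, k' :: l',
          hij, by simp, rfl, rfl⟩, h⟩
    · rintro ⟨t, ht, ⟨u, w, w', rfl, rfl, i, j, l, l', hij, hl, rfl, rfl⟩, h⟩
      have hj : u ++ [j] ∈ T.dom := T.prefix_closed ht ⟨l', by simp⟩
      match l, l', hl with
      | [], k :: l', _ =>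
        exact .inl ⟨u, i, j, hij, rfl, hj, k, l', by simpa using ht, by simpa using h⟩
      | k :: l, [], _ =>
        exact .inr ⟨u ++ [i], k, l, by simp, u, i, j, hij, rfl, hj, .inl h⟩
      | k :: l, k' :: l', _ =>
        exact .inr ⟨u ++ [i], k, l, by simp, u, i, j, hij, rfl, hj,
          .inr ⟨k', l', by simpa using ht, by simpa using h⟩⟩

end CoreDef

instance : Finite OT := by
  refine Finite.of_surjective (fun n : Fin 11 => (match n with
    | 0 => .root | 1 => .self | 2 => .child | 3 => .desc | 4 => .child' | 5 => .desc'
    | 6 => .next | 7 => .later | 8 => .next' | 9 => .later' | 10 => .other : OT)) ?_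
  intro τ
  cases τ
  exacts [⟨0, rfl⟩, ⟨1, rfl⟩, ⟨2, rfl⟩, ⟨3, rfl⟩, ⟨4, rfl⟩, ⟨5, rfl⟩, ⟨6, rfl⟩, ⟨7, rfl⟩,
    ⟨8, rfl⟩, ⟨9, rfl⟩, ⟨10, rfl⟩]

/-! ### From two-variable formulas to Core XPath -/

/-- A separated form of `φ` relative to the variables `x`, `y`: a finite Core XPath colouring
`c` of the nodes such that, once the colour of `x` and the position of the pair `(x, y)` are
known, `φ` is a Core XPath property of `y` alone. -/
def Separated (φ : FOV A) (x y : ℕ) : Prop :=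
  ∃ (K : Type) (_ : Finite K) (c : UTree A → Node → K) (β : K → OT → UTree A → Node → Prop),
    (∀ k, CoreDef fun T s => c T s = k) ∧ (∀ k τ, CoreDef (β k τ)) ∧
    ∀ (T : UTree A) (v : ℕ → Node), v x ∈ T.dom → v y ∈ T.dom → ∀ τ : OT, τ.rel (v x) (v y) →
      (FOV.Sat T v φ ↔ β (c T (v x)) τ T (v y))

namespace Separated

variable {φ ψ : FOV A} {x y : ℕ}

theorem of_left {P : UTree A → Node → Prop} (hP : CoreDef P)
    (h : ∀ (T : UTree A) (v : ℕ → Node), v x ∈ T.dom → v y ∈ T.dom →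
      (FOV.Sat T v φ ↔ P T (v x))) : Separated φ x y := by
  classical
  refine ⟨Bool, inferInstance, fun T s => decide (P T s), fun k _ _ _ => k = true, ?_,
    fun k _ => CoreDef.const _, fun T v hx hy τ _ => by simp [h T v hx hy]⟩
  rintro (_ | _)
  · exact hP.not.congr fun T s _ => by simp
  · exact hP.congr fun T s _ => by simp

theorem of_right {P : UTree A → Node → Prop} (hP : CoreDef P)
    (h : ∀ (T : UTree A) (v : ℕ → Node), v x ∈ T.dom → v y ∈ T.dom →
      (FOV.Sat T v φ ↔ P T (v y))) : Separated φ x y :=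
  ⟨Unit, inferInstance, fun _ _ => (), fun _ _ => P,
    fun _ => (CoreDef.const True).congr fun _ _ _ => by simp, fun _ _ => hP,
    fun T v hx hy _ _ => h T v hx hy⟩

theorem of_ot (p : OT → Prop)
    (h : ∀ (T : UTree A) (v : ℕ → Node), v x ∈ T.dom → v y ∈ T.dom → ∀ τ : OT,
      τ.rel (v x) (v y) → (FOV.Sat T v φ ↔ p τ)) : Separated φ x y :=
  ⟨Unit, inferInstance, fun _ _ => (), fun _ τ _ _ => p τ,
    fun _ => (CoreDef.const True).congr fun _ _ _ => by simp, fun _ _ => CoreDef.const _, h⟩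

theorem not (hφ : Separated φ x y) : Separated (.not φ) x y := by
  obtain ⟨K, hK, c, β, hc, hβ, h⟩ := hφ
  exact ⟨K, hK, c, fun k τ T s => ¬ β k τ T s, hc, fun k τ => (hβ k τ).not,
    fun T v hx hy τ hτ => by rw [FOV.Sat, h T v hx hy τ hτ]⟩

theorem and (hφ : Separated φ x y) (hψ : Separated ψ x y) : Separated (.and φ ψ) x y := by
  obtain ⟨K, hK, c, β, hc, hβ, h⟩ := hφ
  obtain ⟨K', hK', c', β', hc', hβ', h'⟩ := hψ
  refine ⟨K × K', inferInstance, fun T s => (c T s, c' T s),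
    fun k τ T s => β k.1 τ T s ∧ β' k.2 τ T s, ?_, fun k τ => (hβ k.1 τ).and (hβ' k.2 τ),
    fun T v hx hy τ hτ => by rw [FOV.Sat, h T v hx hy τ hτ, h' T v hx hy τ hτ]⟩
  rintro ⟨k, k'⟩
  exact ((hc k).and (hc' k')).congr fun T s _ => by simp

/-- Quantifying the second variable of a separated formula gives a Core XPath predicate of the
first: a finite disjunction over its colour and the position of the witness. -/
theorem exists_coreDef (hφ : Separated φ x y) (hxy : x ≠ y) :
    ∃ P : UTree A → Node → Prop, CoreDef P ∧ ∀ (T : UTree A) (v : ℕ → Node), v x ∈ T.dom →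
      (FOV.Sat T v (.ex y φ) ↔ P T (v x)) := by
  obtain ⟨K, hK, c, β, hc, hβ, h⟩ := hφ
  refine ⟨fun T s => ∃ k : K, ∃ τ : OT, c T s = k ∧ ∃ t ∈ T.dom, τ.rel s t ∧ β k τ T t,
    CoreDef.exists_finite fun k => CoreDef.exists_finite fun τ => (hc k).and ((hβ k τ).ot τ), ?_⟩
  intro T v hx
  have hv : ∀ t, Function.update v y t x = v x := fun t => Function.update_of_ne hxy _ _
  have hv' : ∀ t, Function.update v y t y = t := fun t => Function.update_self _ _ _
  have h' : ∀ t ∈ T.dom, ∀ τ : OT, τ.rel (v x) t →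
      (FOV.Sat T (Function.update v y t) φ ↔ β (c T (v x)) τ T t) := by
    intro t ht τ hτ
    have := h T (Function.update v y t) (by rwa [hv]) (by rwa [hv']) τ (by rwa [hv, hv'])
    rwa [hv, hv'] at this
  rw [FOV.Sat]
  constructor
  · rintro ⟨t, ht, hs⟩
    obtain ⟨τ, hτ⟩ := OT.exists_rel (v x) t
    exact ⟨_, τ, rfl, t, ht, hτ, (h' t ht τ hτ).1 hs⟩
  · rintro ⟨_, τ, rfl, t, ht, hτ, hs⟩
    exact ⟨t, ht, (h' t ht τ hτ).2 hs⟩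

end Separated

theorem separated_of_twoVar (φ : FOV A) :
    ∀ x y : ℕ, x ≠ y → (∀ n ∈ φ.vars, n = x ∨ n = y) → Separated φ x y := by
  induction φ with
  | eq a b =>
    intro x y hxy hv
    simp only [FOV.vars, List.mem_cons, List.not_mem_nil, or_false, forall_eq_or_imp,
      forall_eq] at hv
    rcases hv with ⟨rfl | rfl, rfl | rfl⟩
    · exact .of_left (CoreDef.const True) fun T v _ _ => by simp [FOV.Sat]
    · exact .of_ot _ fun T v _ _ τ hτ => by rw [FOV.Sat]; exact OT.eq_iff hτ
    · exact .of_ot _ fun T v _ _ τ hτ => by rw [FOV.Sat, eq_comm]; exact OT.eq_iff hτ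
    · exact .of_left (CoreDef.const True) fun T v _ _ => by simp [FOV.Sat]
  | lab a n =>
    intro x y hxy hv
    rcases hv n (by simp [FOV.vars]) with rfl | rfl
    · exact .of_left (CoreDef.lab a) fun T v _ _ => by rw [FOV.Sat]
    · exact .of_right (CoreDef.lab a) fun T v _ _ => by rw [FOV.Sat]
  | rel r a b =>
    intro x y hxy hv
    -- On the diagonal an atom is decided by whether the node is the root.
    have hdiag : CoreDef fun (T : UTree A) s => ∃ t ∈ T.dom, s = t ∧ r.rel T s t := by
      have h := CoreDef.exists_finite (A := A) fun τ : OT => (CoreDef.const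
        ((τ = .root ∨ τ = .self) ∧ OT.holds r τ)).ot τ
      refine h.congr fun T s hs => ?_
      constructor
      · rintro ⟨τ, t, ht, hτ, h1, h2⟩
        exact ⟨t, ht, (OT.eq_iff hτ).2 h1, (OT.rel_iff T hs ht hτ r).2 h2⟩
      · rintro ⟨t, ht, h1, h2⟩
        obtain ⟨τ, hτ⟩ := OT.exists_rel s t
        exact ⟨τ, t, ht, hτ, (OT.eq_iff hτ).1 h1, (OT.rel_iff T hs ht hτ r).1 h2⟩
    have hdiag' : CoreDef fun (T : UTree A) s => r.rel T s s :=
      hdiag.congr fun T s hs => by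
        constructor
        · rintro ⟨t, _, rfl, h⟩
          exact h
        · exact fun h => ⟨s, hs, rfl, h⟩
    simp only [FOV.vars, List.mem_cons, List.not_mem_nil, or_false, forall_eq_or_imp,
      forall_eq] at hv
    rcases hv with ⟨rfl | rfl, rfl | rfl⟩
    · exact .of_left hdiag' fun T v _ _ => by rw [FOV.Sat]
    · exact .of_ot _ fun T v hx hy τ hτ => by rw [FOV.Sat]; exact OT.rel_iff T hx hy hτ r
    · exact .of_ot _ fun T v hx hy τ hτ => by
        rw [FOV.Sat]; exact OT.rel_iff T hy hx (OT.rel_swap hτ) r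
    · exact .of_right hdiag' fun T v _ _ => by rw [FOV.Sat]
  | not φ ih => exact fun x y hxy hv => (ih x y hxy hv).not
  | and φ ψ ih ih' =>
    intro x y hxy hv
    simp only [FOV.vars, List.mem_append] at hv
    exact (ih x y hxy fun n hn => hv n (.inl hn)).and (ih' x y hxy fun n hn => hv n (.inr hn))
  | ex n φ ih =>
    intro x y hxy hv
    simp only [FOV.vars, List.mem_cons] at hv
    have hv' : ∀ n ∈ φ.vars, n = x ∨ n = y := fun n hn => hv n (.inr hn)
    rcases hv n (.inl rfl) with rfl | rfl
    · obtain ⟨P, hP, h⟩ :=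
        (ih y n hxy.symm fun m hm => (hv' m hm).symm).exists_coreDef hxy.symm
      exact .of_right hP fun T v _ hy => h T v hy
    · obtain ⟨P, hP, h⟩ := (ih x n hxy hv').exists_coreDef hxy
      exact .of_left hP fun T v hx _ => h T v hx

/-! ### From Core XPath to two-variable formulas -/

/-- A family of unary predicates defined by a two-variable formula in the free variable `0`,
and also by one in the free variable `1`, regardless of the value of the other variable. -/
def FODef (P : UTree A → Node → Prop) : Prop :=
  ∀ x < 2, ∃ φ : FOV A, φ.TwoVar ∧ ∀ (T : UTree A) (v : ℕ → Node), v x ∈ T.dom →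
    (FOV.Sat T v φ ↔ P T (v x))

namespace FODef

variable {P Q : UTree A → Node → Prop}

theorem congr (hP : FODef P) (h : ∀ T s, s ∈ T.dom → (P T s ↔ Q T s)) : FODef Q := by
  intro x hx
  obtain ⟨φ, hφ, hs⟩ := hP x hx
  exact ⟨φ, hφ, fun T v hv => (hs T v hv).trans (h T _ hv)⟩

theorem not (hP : FODef P) : FODef fun T s => ¬ P T s := by
  intro x hx
  obtain ⟨φ, hφ, hs⟩ := hP x hx
  exact ⟨.not φ, hφ, fun T v hv => by rw [FOV.Sat, hs T v hv]⟩

theorem and (hP : FODef P) (hQ : FODef Q) : FODef fun T s => P T s ∧ Q T s := by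
  intro x hx
  obtain ⟨φ, hφ, hs⟩ := hP x hx
  obtain ⟨ψ, hψ, hs'⟩ := hQ x hx
  refine ⟨.and φ ψ, ?_, fun T v hv => by rw [FOV.Sat, hs T v hv, hs' T v hv]⟩
  intro n hn
  simp only [FOV.vars, List.mem_append] at hn
  exact hn.elim (hφ n) (hψ n)

theorem or (hP : FODef P) (hQ : FODef Q) : FODef fun T s => P T s ∨ Q T s :=
  (hP.not.and hQ.not).not.congr fun T s _ => by tauto

/-- The modality of a binary relation `R` that is definable in two variables; the formula for
`P` reuses the variable not holding the current node. -/
theorem exists_rel {R : UTree A → Node → Node → Prop} (ρ : ℕ → ℕ → FOV A)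
    (hρ : ∀ x < 2, ∀ y < 2, (ρ x y).TwoVar)
    (hR : ∀ T v x y, v x ∈ T.dom → v y ∈ T.dom → (FOV.Sat T v (ρ x y) ↔ R T (v x) (v y)))
    (hmem : ∀ T s t, R T s t → t ∈ T.dom) (hP : FODef P) :
    FODef fun T s => ∃ t, R T s t ∧ P T t := by
  intro x hx
  have hy : 1 - x < 2 := by omega
  have hxy : x ≠ 1 - x := by omega
  obtain ⟨φ, hφ, hs⟩ := hP (1 - x) hy
  refine ⟨.ex (1 - x) (.and (ρ x (1 - x)) φ), ?_, fun T v hv => ?_⟩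
  · intro n hn
    simp only [FOV.vars, List.mem_cons, List.mem_append] at hn
    rcases hn with rfl | hn | hn
    · exact hy
    · exact hρ x hx _ hy n hn
    · exact hφ n hn
  · have hv1 : ∀ t, Function.update v (1 - x) t x = v x :=
      fun t => Function.update_of_ne hxy _ _
    have hv2 : ∀ t, Function.update v (1 - x) t (1 - x) = t :=
      fun t => Function.update_self _ _ _
    have key : ∀ t ∈ T.dom, (FOV.Sat T (Function.update v (1 - x) t) (.and (ρ x (1 - x)) φ) ↔
        R T (v x) t ∧ P T t) := by
      intro t ht
      rw [FOV.Sat, hR _ _ _ _ (by rwa [hv1]) (by rwa [hv2]), hs _ _ (by rwa [hv2]), hv1, hv2]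
    rw [FOV.Sat]
    constructor
    · rintro ⟨t, ht, h⟩
      exact ⟨t, (key t ht).1 h⟩
    · rintro ⟨t, h⟩
      have ht := hmem _ _ _ h.1
      exact ⟨t, ht, (key t ht).2 h⟩

theorem transGen_childR_iff (T : UTree A) {s t : Node} (hs : s ∈ T.dom) (ht : t ∈ T.dom) :
    Relation.TransGen T.childR s t ↔ T.descR s t ∧ ¬ s = t := by
  rw [transGen_childR]
  constructor
  · rintro ⟨_, _, i, w, rfl⟩
    exact ⟨⟨hs, ht, _, rfl⟩, by simp⟩
  · rintro ⟨⟨_, _, w, rfl⟩, hne⟩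
    cases w with
    | nil => simp at hne
    | cons i w => exact ⟨hs, ht, i, w, rfl⟩

theorem transGen_nsR_iff (T : UTree A) {s t : Node} (hs : s ∈ T.dom) (ht : t ∈ T.dom) :
    Relation.TransGen T.nsR s t ↔ T.sibR s t ∧ ¬ s = t := by
  rw [transGen_nsR]
  constructor
  · rintro ⟨_, _, u, i, j, hij, rfl, rfl⟩
    exact ⟨⟨hs, ht, u, i, j, rfl, rfl, hij.le⟩, by simp [hij.ne]⟩
  · rintro ⟨⟨_, _, u, i, j, rfl, rfl, hij⟩, hne⟩
    refine ⟨hs, ht, u, i, j, lt_of_le_of_ne hij ?_, rfl, rfl⟩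
    rintro rfl
    exact hne rfl

/-- The two-variable formula for a single step. -/
def stepF : XStep → ℕ → ℕ → FOV A
  | .ch, x, y => .rel .ch x y
  | .chI, x, y => .rel .ch y x
  | .ns, x, y => .rel .ns x y
  | .nsI, x, y => .rel .ns y x

/-- The two-variable formula for the transitive closure of a step: the reflexive closure minus
the diagonal. -/
def plusF : XStep → ℕ → ℕ → FOV A
  | .ch, x, y => .and (.rel .desc x y) (.not (.eq x y))
  | .chI, x, y => .and (.rel .desc y x) (.not (.eq y x))
  | .ns, x, y => .and (.rel .sib x y) (.not (.eq x y))
  | .nsI, x, y => .and (.rel .sib y x) (.not (.eq y x))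

theorem step (st : XStep) (hP : FODef P) :
    FODef fun T s => ∃ t, st.rel T s t ∧ P T t := by
  refine exists_rel (stepF st) ?_ ?_ (fun T s t h => CoreDef.rel_mem T st h) hP
  · intro x hx y hy n hn
    cases st <;> simp [stepF, FOV.vars] at hn <;> omega
  · intro T v x y _ _
    cases st <;> rfl

theorem plus (st : XStep) (hP : FODef P) :
    FODef fun T s => ∃ t, Relation.TransGen (st.rel T) s t ∧ P T t := by
  refine exists_rel (plusF st) ?_ ?_ (fun T s t h => CoreDef.transGen_mem T st h) hP
  · intro x hx y hy n hn
    cases st <;> simp [plusF, FOV.vars] at hn <;> omega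
  · intro T v x y hx hy
    cases st
    · exact (transGen_childR_iff T hx hy).symm
    · exact (transGen_childR_iff T hy hx).symm.trans Relation.transGen_swap.symm
    · exact (transGen_nsR_iff T hx hy).symm
    · exact (transGen_nsR_iff T hy hx).symm.trans Relation.transGen_swap.symm

theorem true : FODef fun (_ : UTree A) _ => True := by
  intro x hx
  refine ⟨.eq x x, ?_, fun T v _ => by simp [FOV.Sat]⟩
  intro n hn
  simp [FOV.vars] at hn
  omega

end FODef

mutual
  theorem CoreNode.foDef : ∀ α : CoreNode A, FODef fun T s => CoreNode.Sat T s α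
    | .lab a => by
      intro x hx
      refine ⟨.lab a x, ?_, fun T v _ => by simp only [FOV.Sat, CoreNode.Sat]⟩
      intro n hn
      simp [FOV.vars] at hn
      omega
    | .not α => (CoreNode.foDef α).not.congr fun T s _ => by simp only [CoreNode.Sat]
    | .or α β => ((CoreNode.foDef α).or (CoreNode.foDef β)).congr
        fun T s _ => by simp only [CoreNode.Sat]
    | .E β => (CorePath.foDef β _ FODef.true).congr fun T s _ => by simp [CoreNode.Sat]
  /-- The predecessor set of a definable set under a path formula is definable. Treating
  the target set as a parameter lets compositions be translated without a third variable. -/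
  theorem CorePath.foDef : ∀ (β : CorePath A) (P : UTree A → Node → Prop), FODef P →
      FODef fun T s => ∃ t, CorePath.Sat T s t β ∧ P T t
    | .test α, P, hP => ((CoreNode.foDef α).and hP).congr fun T s _ => by
        simp [CorePath.Sat, and_assoc]
    | .step st, P, hP => (hP.step st).congr fun T s _ => by simp [CorePath.Sat]
    | .stepPlus st, P, hP => (hP.plus st).congr fun T s _ => by simp [CorePath.Sat]
    | .comp β γ, P, hP => (CorePath.foDef β _ (CorePath.foDef γ P hP)).congr fun T s _ => by
        simp only [CorePath.Sat]
        constructor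
        · rintro ⟨u, h1, t, h2, h3⟩
          exact ⟨t, ⟨u, h1, h2⟩, h3⟩
        · rintro ⟨t, ⟨u, h1, h2⟩, h3⟩
          exact ⟨u, h1, t, h2, h3⟩
    | .or β γ, P, hP => ((CorePath.foDef β P hP).or (CorePath.foDef γ P hP)).congr
        fun T s _ => by
          simp only [CorePath.Sat, or_and_right, exists_or]
end

end Trees

/-- The node formulas of Core XPath have precisely the power
of unary FO² queries (first-order logic with two variables) in the vocabulary
`≺_ch, ≺*_ch, ≺_ns, ≺*_ns` over ordered unranked Σ-trees. -/
theorem corexpath_iff_fo2 (A : Type) [Fintype A]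
    (Q : UTree A → Set Node) (hQ : ∀ T, Q T ⊆ ↑T.dom) :
    (∃ α : CoreNode A, ∀ (T : UTree A) (s : Node), s ∈ T.dom →
        (s ∈ Q T ↔ CoreNode.Sat T s α)) ↔
    (∃ φ : FOV A, φ.TwoVar ∧
      ∀ (T : UTree A) (v : ℕ → Node) (s : Node), s ∈ T.dom →
        (s ∈ Q T ↔ FOV.Sat T (Function.update v 0 s) φ)) := by
  constructor
  · rintro ⟨α, hα⟩
    obtain ⟨φ, hφ, h⟩ := CoreNode.foDef α 0 (by omega)
    refine ⟨φ, hφ, fun T v s hs => ?_⟩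
    have := h T (Function.update v 0 s) (by simpa using hs)
    rw [Function.update_self] at this
    rw [hα T s hs, this]
  · rintro ⟨φ, hφ, h⟩
    -- Identifying the two variables makes `φ` genuinely unary.
    obtain ⟨P, ⟨α, hα⟩, hP⟩ := (separated_of_twoVar (.and (.eq 0 1) φ) 0 1 (by omega) (by
      intro n hn
      simp only [FOV.vars, List.mem_append, List.mem_cons, List.not_mem_nil, or_false] at hn
      rcases hn with hn | hn
      · exact hn
      · have := hφ n hn
        omega)).exists_coreDef (by omega)
    refine ⟨α, fun T s hs => ?_⟩
    have h1 := hP T (fun _ => s) hs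
    have hc : ∀ n, Function.update (fun _ : ℕ => s) n s = fun _ => s :=
      fun n => Function.update_eq_self n _
    rw [hα T s hs, ← h1, h T (fun _ => s) s hs, hc]
    simp only [FOV.Sat]
    constructor
    · intro hsat
      refine ⟨s, hs, ?_⟩
      rw [hc]
      exact ⟨rfl, hsat⟩
    · rintro ⟨t, _, he, hsat⟩
      simp only [ne_eq, zero_ne_one, not_false_eq_true, Function.update_of_ne,
        Function.update_self] at he
      subst he
      rwa [hc] at hsat

end UnrankedTrees
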